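/- The set of vectors of (3E₈⊕H)⊗ℝ fixed pointwise by every ℍ-linear isometry of (3E₈⊕H)⊗ℝ that permutes the 14 roots of the diagram D, taking points to points and lines to lines via a collineation of P²(𝔽₂), is exactly the 2-dimensional right ℍ-subspace w_Pℍ + w_Lℍ spanned by w_P and w_L. -/

import Mathlib

/- Formalization over the ring ℋ of Hurwitz integers inside the real quaternions. -/

noncomputable section
open Quaternion Finset

/-- The real quaternions ℍ. -/
abbrev Quat := Quaternion ℝ

/-- The quaternion `i`. -/
def qi : Quat := ⟨0, 1, 0, 0⟩
/-- The quaternion `j`. -/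
def qj : Quat := ⟨0, 0, 1, 0⟩
/-- The quaternion `k`. -/
def qk : Quat := ⟨0, 0, 0, 1⟩
/-- `p = 1 - i`. -/
def qp : Quat := 1 - qi

/-- A quaternion is a Hurwitz integer if it is `(a+bi+cj+dk)/2` with
`a,b,c,d` integers which are all congruent mod `2`. -/
def IsHurwitz (q : Quat) : Prop :=
  ∃ a b c d : ℤ, a % 2 = b % 2 ∧ b % 2 = c % 2 ∧ c % 2 = d % 2 ∧
    q = ⟨(a : ℝ) / 2, (b : ℝ) / 2, (c : ℝ) / 2, (d : ℝ) / 2⟩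

/-- A unit of the ring ℋ of Hurwitz integers. -/
def IsUnitH (q : Quat) : Prop :=
  IsHurwitz q ∧ ∃ r : Quat, IsHurwitz r ∧ q * r = 1 ∧ r * q = 1

/-- Membership in the (two-sided) ideal `pℋ`. -/
def InPH (q : Quat) : Prop := ∃ h : Quat, IsHurwitz h ∧ q = qp * h

/-- The ambient space of the lattice `L = 3E₈ ⊕ H`: three pairs (the `E₈` summands)
together with the two coordinates of the hyperbolic cell `H`. -/
abbrev V3 : Type := (Fin 3 → Quat × Quat) × Quat × Quat

/-- The ℋ-valued form on `3E₈ ⊕ H`:  negative definite standard form on each `E₈`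
summand and the hyperbolic form `⟨(x₁,x₂),(y₁,y₂)⟩ = x̄₁ p̄ y₂ + x̄₂ p y₁` on `H`. -/
def ip3 (x y : V3) : Quat :=
  (∑ s : Fin 3, (-(star (x.1 s).1 * (y.1 s).1) - star (x.1 s).2 * (y.1 s).2))
    + star x.2.1 * star qp * y.2.2 + star x.2.2 * qp * y.2.1

/-- Membership in the `E₈` lattice: both coordinates Hurwitz and congruent mod `pℋ`. -/
def memE8 (q : Quat × Quat) : Prop := IsHurwitz q.1 ∧ IsHurwitz q.2 ∧ InPH (q.1 - q.2)

/-- Membership in the lattice `L = 3E₈ ⊕ H`. -/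
def memL3 (v : V3) : Prop := (∀ s, memE8 (v.1 s)) ∧ IsHurwitz v.2.1 ∧ IsHurwitz v.2.2

/-- Right scalar multiplication on the ambient space of `3E₈ ⊕ H`. -/
def rmul3 (v : V3) (q : Quat) : V3 :=
  (fun s => ((v.1 s).1 * q, (v.1 s).2 * q), v.2.1 * q, v.2.2 * q)

/-- The `μ`-reflection in a root `r` : `v ↦ v − r(1−μ)⟨r,v⟩/|r|²`. -/
def refl3 (r : V3) (μ : Quat) (v : V3) : V3 := v - rmul3 r ((1 - μ) * ip3 r v / ip3 r r)

/-- The root `a` of the diagram `D`. -/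
def rootA : V3 := (fun _ => (0, 0), 1, -1)
/-- The roots `c_s` of the diagram `D`. -/
def rootC (s : Fin 3) : V3 := (fun t => if t = s then ((1 : Quat), (-1 : Quat)) else 0, 0, 0)
/-- The roots `e_s` of the diagram `D` (with `(1,1)` in the two other `E₈` slots). -/
def rootE (s : Fin 3) : V3 := (fun t => if t = s then (0 : Quat × Quat) else (1, 1), -qi, -1)
/-- The root `f` of the diagram `D`. -/
def rootF : V3 := (fun _ => (0, qp), -(qi * qp), -qp)
/-- The roots `b_s` of the diagram `D`. -/
def rootB (s : Fin 3) : V3 := (fun t => if t = s then ((0 : Quat), qp) else 0, -1, 0)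
/-- The roots `d_s` of the diagram `D`. -/
def rootD (s : Fin 3) : V3 := (fun t => if t = s then (-qp, (0 : Quat)) else 0, 0, 0)

/-- The set of roots of `L`. -/
def Roots3 : Set V3 := {r | memL3 r ∧ ip3 r r = -2}

/-- The reflection group `R(L)` of `L = 3E₈ ⊕ H`, as the subgroup of permutations of the
ambient space generated by the `μ`-reflections in all roots of `L` (for all units `μ ≠ 1`). -/
def RL3 : Subgroup (Equiv.Perm V3) :=
  Subgroup.closure {g | ∃ r μ, r ∈ Roots3 ∧ IsUnitH μ ∧ μ ≠ 1 ∧ ∀ v, g v = refl3 r μ v}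

/-- The seven `points` of the diagram `D`. -/
def Pt : Fin 7 → V3 := ![rootA, rootC 0, rootC 1, rootC 2, rootE 0, rootE 1, rootE 2]
/-- The seven `lines` of the diagram `D`. -/
def Ln : Fin 7 → V3 := ![rootF, rootB 0, rootB 1, rootB 2, rootD 0, rootD 1, rootD 2]

open Classical in
/-- `w_P = l p̄ + Σ_{x incident to l} x`, computed from the line `Ln s`. -/
def wPof (s : Fin 7) : V3 :=
  rmul3 (Ln s) (star qp) + ∑ t : Fin 7, if ip3 (Pt t) (Ln s) = qp then Pt t else 0

open Classical in
/-- `w_L = x p + Σ_{l incident to x} l`, computed from the point `Pt t`. -/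
def wLof (t : Fin 7) : V3 :=
  rmul3 (Pt t) qp + ∑ s : Fin 7, if ip3 (Pt t) (Ln s) = qp then Ln s else 0

/-- `w_P` (computed from the line `f`). -/
def wP : V3 := wPof 0
/-- `w_L` (computed from the point `a`). -/
def wL : V3 := wLof 0

/-- An ℍ-linear isometry of `(3E₈ ⊕ H) ⊗ ℝ` permuting the 14 roots of the diagram `D`,
taking points to points and lines to lines via a collineation of `P²(𝔽₂)`. -/
def IsDiagAut (g : V3 → V3) : Prop :=
  Function.Bijective g ∧
  (∀ v w, g (v + w) = g v + g w) ∧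
  (∀ v q, g (rmul3 v q) = rmul3 (g v) q) ∧
  (∀ v w, ip3 (g v) (g w) = ip3 v w) ∧
  ∃ σ τ : Equiv.Perm (Fin 7),
    (∀ t s, ip3 (Pt t) (Ln s) = qp ↔ ip3 (Pt (σ t)) (Ln (τ s)) = qp) ∧
    (∀ t, g (Pt t) = Pt (σ t)) ∧ (∀ s, g (Ln s) = Ln (τ s))


set_option linter.unusedSimpArgs false

/-- Incidence table of the Fano plane. -/
def inc (t s : Fin 7) : Bool :=
  (![![false, true, true, true, false, false, false],
     ![true, true, false, false, true, false, false],
     ![true, false, true, false, false, true, false],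
     ![true, false, false, true, false, false, true],
     ![false, true, false, false, true, true, true],
     ![false, false, true, false, true, true, true],
     ![false, false, false, true, true, true, true]] : Fin 7 → Fin 7 → Bool) t s &&
   !(t.val ≥ 4 && s.val = t.val)

/-- Explicit form of `w_P`. -/
def W : V3 := (fun _ => (1, 1), -(2 * qi), -2)
/-- Explicit form of `w_L`. -/
def WLx : V3 := (fun _ => (0, qp), qp - 3, -qp)

lemma qi_re : qi.re = 0 := rfl
lemma qi_imI : qi.imI = 1 := rfl
lemma qi_imJ : qi.imJ = 0 := rfl
lemma qi_imK : qi.imK = 0 := rfl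

lemma qi_mul_qi : qi * qi = -1 := by
  ext <;> simp [qi_re, qi_imI, qi_imJ, qi_imK]

lemma qi_mul_qi_mul (x : Quat) : qi * (qi * x) = -x := by
  rw [← mul_assoc, qi_mul_qi, neg_one_mul]

lemma star_qi : star qi = -qi := by
  ext <;> simp [qi_re, qi_imI, qi_imJ, qi_imK]

lemma q2_eq : (2 : Quat) = (2 : ℝ) • (1 : Quat) := by
  rw [ofNat_smul_eq_nsmul]
  simp

lemma q3_eq : (3 : Quat) = (3 : ℝ) • (1 : Quat) := by
  rw [ofNat_smul_eq_nsmul]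
  simp

lemma gram_PP (t s : Fin 7) : ip3 (Pt t) (Pt s) = if t = s then -2 else 0 := by
  fin_cases t <;> fin_cases s <;>
    simp [Pt, rootA, rootC, rootE, ip3, Fin.sum_univ_three, qp, star_qi, mul_sub, sub_mul,
      mul_add, add_mul, qi_mul_qi, qi_mul_qi_mul, mul_assoc] <;>
    ((try simp only [q2_eq, q3_eq, smul_mul_assoc, mul_smul_comm, one_mul, mul_one]); module)

lemma gram_PL (t s : Fin 7) : ip3 (Pt t) (Ln s) = if inc t s then qp else 0 := by
  fin_cases t <;> fin_cases s <;>
    simp [Pt, Ln, rootA, rootC, rootE, rootF, rootB, rootD, inc, ip3, Fin.sum_univ_three, qp,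
      star_qi, mul_sub, sub_mul,
      mul_add, add_mul, qi_mul_qi, qi_mul_qi_mul, mul_assoc] <;>
    ((try simp only [q2_eq, q3_eq, smul_mul_assoc, mul_smul_comm, one_mul, mul_one]); module)

lemma gram_PW (t : Fin 7) : ip3 (Pt t) W = 0 := by
  fin_cases t <;>
    simp [Pt, W, rootA, rootC, rootE, ip3, Fin.sum_univ_three, qp, star_qi, mul_sub, sub_mul,
      mul_add, add_mul, qi_mul_qi, qi_mul_qi_mul, mul_assoc, two_mul, mul_two] <;>
    ((try simp only [q2_eq, q3_eq, smul_mul_assoc, mul_smul_comm, one_mul, mul_one]); module)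

lemma gram_WL (s : Fin 7) : ip3 W (Ln s) = qp := by
  fin_cases s <;>
    simp [Ln, W, rootF, rootB, rootD, ip3, Fin.sum_univ_three, qp, star_qi, mul_sub, sub_mul,
      mul_add, add_mul, qi_mul_qi, qi_mul_qi_mul, mul_assoc, two_mul, mul_two] <;>
    ((try simp only [q2_eq, q3_eq, smul_mul_assoc, mul_smul_comm, one_mul, mul_one]); module)

lemma gram_WW : ip3 W W = 2 := by
  simp [W, ip3, Fin.sum_univ_three, qp, star_qi, mul_sub, sub_mul,
      mul_add, add_mul, qi_mul_qi, qi_mul_qi_mul, mul_assoc, two_mul, mul_two]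
  (try simp only [q2_eq, q3_eq, smul_mul_assoc, mul_smul_comm, one_mul, mul_one])
  module

lemma qp_ne : qp ≠ 0 := by
  intro h
  have h1 : qi = 1 := (sub_eq_zero.1 h).symm
  have := congrArg (fun q : Quat => q.re) h1
  simp [qi_re] at this

lemma inc_iff (t s : Fin 7) : ip3 (Pt t) (Ln s) = qp ↔ inc t s = true := by
  rw [gram_PL]
  by_cases h : inc t s = true <;> simp [h, qp_ne.symm]

lemma wPof_eq (s : Fin 7) : wPof s = W := by
  unfold wPof
  simp only [inc_iff]
  apply Prod.ext
  · funext u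
    fin_cases s <;> fin_cases u <;>
    simp [Fin.sum_univ_succ, inc, Pt, Ln, W, rmul3, rootA, rootC, rootE, rootF, rootB, rootD,
      qp, star_qi, mul_sub, sub_mul, mul_add, add_mul, qi_mul_qi, qi_mul_qi_mul, mul_assoc] <;>
    ((try simp only [q2_eq, q3_eq, smul_mul_assoc, mul_smul_comm, one_mul, mul_one]); module)
  · fin_cases s <;> apply Prod.ext <;>
    simp [Fin.sum_univ_succ, inc, Pt, Ln, W, rmul3, rootA, rootC, rootE, rootF, rootB, rootD,
      qp, star_qi, mul_sub, sub_mul, mul_add, add_mul, qi_mul_qi, qi_mul_qi_mul, mul_assoc] <;>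
    ((try simp only [q2_eq, q3_eq, smul_mul_assoc, mul_smul_comm, one_mul, mul_one]); module)

lemma wLof_eq (s : Fin 7) : wLof s = WLx := by
  unfold wLof
  simp only [inc_iff]
  apply Prod.ext
  · funext u
    fin_cases s <;> fin_cases u <;>
    simp [Fin.sum_univ_succ, inc, Pt, Ln, WLx, rmul3, rootA, rootC, rootE, rootF, rootB, rootD,
      qp, star_qi, mul_sub, sub_mul, mul_add, add_mul, qi_mul_qi, qi_mul_qi_mul, mul_assoc] <;>
    ((try simp only [q2_eq, q3_eq, smul_mul_assoc, mul_smul_comm, one_mul, mul_one]); module)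
  · fin_cases s <;> apply Prod.ext <;>
    simp [Fin.sum_univ_succ, inc, Pt, Ln, WLx, rmul3, rootA, rootC, rootE, rootF, rootB, rootD,
      qp, star_qi, mul_sub, sub_mul, mul_add, add_mul, qi_mul_qi, qi_mul_qi_mul, mul_assoc] <;>
    ((try simp only [q2_eq, q3_eq, smul_mul_assoc, mul_smul_comm, one_mul, mul_one]); module)

lemma ip_A (v : V3) : ip3 rootA v = (1 + qi) * v.2.2 - (1 - qi) * v.2.1 := by
  simp [ip3, rootA, qp, star_qi, mul_sub, sub_mul, mul_add, add_mul]
  module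

lemma ip_C (s : Fin 3) (v : V3) : ip3 (rootC s) v = (v.1 s).2 - (v.1 s).1 := by
  fin_cases s <;> simp [ip3, rootC, Fin.sum_univ_three] <;> module

lemma ip_W (v : V3) : ip3 W v =
    -((v.1 0).1 + (v.1 0).2 + (v.1 1).1 + (v.1 1).2 + (v.1 2).1 + (v.1 2).2)
      + (2 : ℝ) • (qi * v.2.2 - v.2.2 + qi * v.2.1 - v.2.1) := by
  simp [ip3, W, Fin.sum_univ_three, qp, star_qi, mul_sub, sub_mul, mul_add, add_mul, qi_mul_qi,
    qi_mul_qi_mul, mul_assoc, two_mul, mul_two]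
  module

lemma ip_E (s : Fin 3) (v : V3) : ip3 (rootE s) v =
    -((v.1 0).1 + (v.1 0).2 + (v.1 1).1 + (v.1 1).2 + (v.1 2).1 + (v.1 2).2)
      + (v.1 s).1 + (v.1 s).2
      + (qi * v.2.2 - v.2.2 + qi * v.2.1 - v.2.1) := by
  fin_cases s <;>
  simp [ip3, rootE, Fin.sum_univ_three, qp, star_qi, mul_sub, sub_mul, mul_add, add_mul, qi_mul_qi,
    qi_mul_qi_mul, mul_assoc] <;>
  module

lemma sum_Pt (c : V3 → Quat) : ∑ t, rmul3 (Pt t) (c (Pt t)) =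
    rmul3 rootA (c rootA) + rmul3 (rootC 0) (c (rootC 0)) + rmul3 (rootC 1) (c (rootC 1))
    + rmul3 (rootC 2) (c (rootC 2)) + rmul3 (rootE 0) (c (rootE 0)) + rmul3 (rootE 1) (c (rootE 1))
    + rmul3 (rootE 2) (c (rootE 2)) := by
  simp only [Fin.sum_univ_succ, Pt]
  simp
  abel

lemma expand (v : V3) :
    v = (∑ t, rmul3 (Pt t) ((-(1/2) : ℝ) • ip3 (Pt t) v)) + rmul3 W ((1/2 : ℝ) • ip3 W v) := by
  rw [sum_Pt (fun x => (-(1/2) : ℝ) • ip3 x v)]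
  simp only [ip_A, ip_C, ip_E, ip_W]
  obtain ⟨f, m, n⟩ := v
  refine Prod.ext (funext fun u => ?_) ?_
  · generalize h0 : f 0 = f0
    generalize h1 : f 1 = f1
    generalize h2 : f 2 = f2
    fin_cases u <;> refine Prod.ext ?_ ?_ <;>
    simp only [rmul3, rootA, rootC, rootE, W, Prod.fst_add, Prod.snd_add, Pi.add_apply] <;>
    simp [h0, h1, h2, -smul_add] <;> module
  · refine Prod.ext ?_ ?_ <;>
    simp only [rmul3, rootA, rootC, rootE, W, Prod.fst_add, Prod.snd_add] <;>
    simp [mul_sub, sub_mul, mul_add, add_mul, qi_mul_qi_mul, mul_assoc, two_mul, smul_add, smul_sub] <;>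
    module

lemma sum_Pt_eq (c : Quat) : ∑ t, rmul3 (Pt t) c = rmul3 W ((3 : ℝ) • c) - rmul3 WLx (star qp * c) := by
  rw [sum_Pt (fun _ => c)]
  refine Prod.ext (funext fun u => ?_) ?_
  · fin_cases u <;> refine Prod.ext ?_ ?_ <;>
    simp [rmul3, rootA, rootC, rootE, W, WLx, qp, star_qi, mul_sub, sub_mul, mul_add, add_mul, qi_mul_qi_mul, mul_assoc] <;>
    module
  · refine Prod.ext ?_ ?_ <;>
    simp [rmul3, rootA, rootC, rootE, W, WLx, qp, star_qi, mul_sub, sub_mul, mul_add, add_mul, qi_mul_qi_mul, mul_assoc] <;>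
    ((try simp only [q2_eq, q3_eq, smul_mul_assoc, mul_smul_comm, one_mul, mul_one]); module)

lemma ip3_add (x y z : V3) : ip3 x (y + z) = ip3 x y + ip3 x z := by
  simp [ip3, Fin.sum_univ_three, mul_add]
  abel

lemma ip3_rmul (x y : V3) (q : Quat) : ip3 x (rmul3 y q) = ip3 x y * q := by
  simp [ip3, rmul3, Fin.sum_univ_three, add_mul, sub_mul, mul_assoc]

lemma ip3_star (x y : V3) : star (ip3 x y) = ip3 y x := by
  simp [ip3, Fin.sum_univ_three, mul_assoc]
  abel

lemma ip3_sum {ι : Type} (S : Finset ι) (x : V3) (f : ι → V3) :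
    ip3 x (∑ t ∈ S, f t) = ∑ t ∈ S, ip3 x (f t) := by
  classical
  induction S using Finset.induction_on with
  | empty => simp [ip3]
  | insert a S ha ih => rw [Finset.sum_insert ha, Finset.sum_insert ha, ip3_add, ih]

lemma rmul3_add (x y : V3) (q : Quat) : rmul3 (x + y) q = rmul3 x q + rmul3 y q := by
  simp [rmul3, add_mul]
  rfl

lemma rmul3_add_right (x : V3) (q r : Quat) : rmul3 x (q + r) = rmul3 x q + rmul3 x r := by
  simp [rmul3, mul_add]
  rfl

lemma rmul3_mul (x : V3) (q r : Quat) : rmul3 x (q * r) = rmul3 (rmul3 x q) r := by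
  simp [rmul3, mul_assoc]

lemma rmul3_one (x : V3) : rmul3 x 1 = x := by
  simp [rmul3]

lemma rmul3_zero (x : V3) : rmul3 x 0 = 0 := by
  simp [rmul3]
  rfl

lemma rmul3_sum {ι : Type} (S : Finset ι) (f : ι → V3) (q : Quat) :
    rmul3 (∑ t ∈ S, f t) q = ∑ t ∈ S, rmul3 (f t) q := by
  classical
  induction S using Finset.induction_on with
  | empty => simp [rmul3]; rfl
  | insert a S ha ih => rw [Finset.sum_insert ha, Finset.sum_insert ha, rmul3_add, ih]

/-- The isometry fixing `W` and permuting the points according to `σ`. -/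
def G (σ : Equiv.Perm (Fin 7)) (v : V3) : V3 :=
  (∑ t, rmul3 (Pt (σ t)) ((-(1/2) : ℝ) • ip3 (Pt t) v)) + rmul3 W ((1/2 : ℝ) • ip3 W v)

lemma gram_WP (t : Fin 7) : ip3 W (Pt t) = 0 := by
  rw [← ip3_star, gram_PW, star_zero]

lemma ip_P_G (σ : Equiv.Perm (Fin 7)) (t : Fin 7) (v : V3) :
    ip3 (Pt (σ t)) (G σ v) = ip3 (Pt t) v := by
  simp only [G, ip3_add, ip3_sum, ip3_rmul, gram_PP, gram_PW, ite_mul, zero_mul, add_zero,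
    EmbeddingLike.apply_eq_iff_eq, Finset.sum_ite_eq, Finset.mem_univ, if_true]
  rw [q2_eq]
  simp [smul_smul]

lemma ip_W_G (σ : Equiv.Perm (Fin 7)) (v : V3) : ip3 W (G σ v) = ip3 W v := by
  simp only [G, ip3_add, ip3_sum, ip3_rmul, gram_WP, gram_WW, zero_mul, Finset.sum_const_zero,
    zero_add]
  rw [q2_eq]
  simp [smul_smul]

lemma ip_expand (x v : V3) :
    ip3 x v = (∑ t, star (ip3 (Pt t) x) * ((-(1/2) : ℝ) • ip3 (Pt t) v))
      + star (ip3 W x) * ((1/2 : ℝ) • ip3 W v) := by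
  conv_lhs => rw [expand v]
  simp only [ip3_add, ip3_sum, ip3_rmul, ip3_star]

lemma G_ip (σ : Equiv.Perm (Fin 7)) (x v : V3) : ip3 (G σ x) (G σ v) = ip3 x v := by
  rw [ip_expand (G σ x), ip_expand x, ip_W_G, ip_W_G,
    ← Equiv.sum_comp σ (fun t => star (ip3 (Pt t) (G σ x)) * ((-(1/2) : ℝ) • ip3 (Pt t) (G σ v)))]
  simp only [ip_P_G]

lemma G_inv (σ : Equiv.Perm (Fin 7)) (v : V3) : G σ⁻¹ (G σ v) = v := by
  conv_rhs => rw [expand v]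
  rw [G, ip_W_G,
    ← Equiv.sum_comp σ]
  have hs : ∀ t, σ⁻¹ (σ t) = t := fun t => σ.symm_apply_apply t
  simp only [ip_P_G, hs]

lemma ext_ip (x y : V3) (h : ∀ t, ip3 (Pt t) x = ip3 (Pt t) y) (h' : ip3 W x = ip3 W y) :
    x = y := by
  rw [expand x, expand y]
  simp only [h, h']

lemma ext_ip' (σ : Equiv.Perm (Fin 7)) (x y : V3)
    (h : ∀ t, ip3 (Pt (σ t)) x = ip3 (Pt (σ t)) y) (h' : ip3 W x = ip3 W y) :
    x = y :=
  ext_ip x y (fun t => by simpa using h (σ⁻¹ t)) h'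

lemma G_isDiagAut (σ τ : Equiv.Perm (Fin 7)) (h : ∀ t s, inc (σ t) (τ s) = inc t s) :
    IsDiagAut (G σ) := by
  refine ⟨⟨Function.LeftInverse.injective (G_inv σ),
    fun v => ⟨G σ⁻¹ v, by simpa using G_inv σ⁻¹ v⟩⟩, ?_, ?_, G_ip σ, σ, τ, ?_, ?_, ?_⟩
  · intro v w
    apply ext_ip' σ
    · intro t; simp only [ip_P_G, ip3_add]
    · simp only [ip_W_G, ip3_add]
  · intro v q
    apply ext_ip' σ
    · intro t; simp only [ip_P_G, ip3_rmul]
    · simp only [ip_W_G, ip3_rmul]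
  · intro t s; rw [inc_iff, inc_iff, h]
  · intro s
    apply ext_ip' σ
    · intro t; simp only [ip_P_G, gram_PP, EmbeddingLike.apply_eq_iff_eq]
    · simp only [ip_W_G, gram_WP]
  · intro s
    apply ext_ip' σ
    · intro t; simp only [ip_P_G, gram_PL, h]
    · simp only [ip_W_G, gram_WL]

/-- A Singer cycle on points. -/
def sg : Equiv.Perm (Fin 7) :=
  ⟨![1, 2, 4, 6, 3, 0, 5], ![5, 0, 1, 4, 2, 6, 3], by decide, by decide⟩

/-- The induced permutation of lines. -/
def tg : Equiv.Perm (Fin 7) :=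
  ⟨![5, 0, 1, 4, 2, 6, 3], ![1, 2, 4, 6, 3, 0, 5], by decide, by decide⟩

lemma sg_tg : ∀ t s, inc (sg t) (tg s) = inc t s := by decide

lemma G_wP (g : V3 → V3) (hg : IsDiagAut g) : g W = W := by
  obtain ⟨-, hadd, hmul, -, σ, τ, hi, hP, hL⟩ := hg
  have h0 : g 0 = 0 := by simpa using hadd 0 0
  have hs : ∀ f : Fin 7 → V3, g (∑ t, f t) = ∑ t, g (f t) :=
    fun f => map_sum (AddMonoidHom.mk' g hadd) f _
  calc g W = g (wPof 0) := by rw [wPof_eq]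
    _ = wPof (τ 0) := by
      unfold wPof
      rw [hadd, hmul, hL, hs]
      congr 1
      conv_rhs => rw [← Equiv.sum_comp σ]
      refine Finset.sum_congr rfl fun t _ => ?_
      by_cases h : ip3 (Pt t) (Ln 0) = qp
      · rw [if_pos h, if_pos ((hi _ _).1 h)]
        exact hP t
      · rw [if_neg h, if_neg (fun h' => h ((hi _ _).2 h'))]
        exact h0
    _ = W := wPof_eq _

lemma G_wL (g : V3 → V3) (hg : IsDiagAut g) : g WLx = WLx := by
  obtain ⟨-, hadd, hmul, -, σ, τ, hi, hP, hL⟩ := hg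
  have h0 : g 0 = 0 := by simpa using hadd 0 0
  have hs : ∀ f : Fin 7 → V3, g (∑ t, f t) = ∑ t, g (f t) :=
    fun f => map_sum (AddMonoidHom.mk' g hadd) f _
  calc g WLx = g (wLof 0) := by rw [wLof_eq]
    _ = wLof (σ 0) := by
      unfold wLof
      rw [hadd, hmul, hP, hs]
      congr 1
      conv_rhs => rw [← Equiv.sum_comp τ]
      refine Finset.sum_congr rfl fun t _ => ?_
      by_cases h : ip3 (Pt 0) (Ln t) = qp
      · rw [if_pos h, if_pos ((hi _ _).1 h)]
        exact hL t
      · rw [if_neg h, if_neg (fun h' => h ((hi _ _).2 h'))]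
        exact h0
    _ = WLx := wLof_eq _

/-- The set of vectors fixed by all diagram automorphisms is exactly
the right ℍ-span of `w_P` and `w_L`. -/
theorem fixed_space_of_diagram_automorphisms :
    {v : V3 | ∀ g, IsDiagAut g → g v = v} =
      {v : V3 | ∃ q₁ q₂ : Quat, v = rmul3 wP q₁ + rmul3 wL q₂} := by
  have e1 : wP = W := wPof_eq 0
  have e2 : wL = WLx := wLof_eq 0
  rw [e1, e2]
  ext v
  simp only [Set.mem_ofPred_eq]
  constructor
  · intro hv
    have hG := hv (G sg) (G_isDiagAut sg tg sg_tg)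
    have hc : ∀ t, ip3 (Pt (sg t)) v = ip3 (Pt t) v := fun t => by
      have := ip_P_G sg t v
      rwa [hG] at this
    have h1 : ip3 (Pt 1) v = ip3 (Pt 0) v := hc 0
    have h2 : ip3 (Pt 2) v = ip3 (Pt 0) v := (hc 1).trans h1
    have h4 : ip3 (Pt 4) v = ip3 (Pt 0) v := (hc 2).trans h2
    have h3 : ip3 (Pt 3) v = ip3 (Pt 0) v := (hc 4).trans h4
    have h6 : ip3 (Pt 6) v = ip3 (Pt 0) v := (hc 3).trans h3
    have h5 : ip3 (Pt 5) v = ip3 (Pt 0) v := (hc 6).trans h6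
    have hall : ∀ t, ip3 (Pt t) v = ip3 (Pt 0) v := by
      intro t
      fin_cases t
      exacts [rfl, h1, h2, h3, h4, h5, h6]
    have hE := expand v
    simp only [hall] at hE
    rw [sum_Pt_eq] at hE
    have hneg : ∀ q, -rmul3 WLx q = rmul3 WLx (-q) := fun q => by
      rw [neg_eq_iff_add_eq_zero, ← rmul3_add_right, add_neg_cancel, rmul3_zero]
    refine ⟨(3 : ℝ) • ((-(1/2) : ℝ) • ip3 (Pt 0) v) + (1/2 : ℝ) • ip3 W v,
      -(star qp * ((-(1/2) : ℝ) • ip3 (Pt 0) v)), ?_⟩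
    rw [rmul3_add_right, ← hneg]
    refine hE.trans ?_
    abel
  · rintro ⟨q₁, q₂, rfl⟩ g hg
    rw [hg.2.1, hg.2.2.1, hg.2.2.1, G_wP g hg, G_wL g hg]
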